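/- Let H be a graph on vertex set {1,...,r} and G a graph with vertex subsets V_1,...,V_r (not necessarily disjoint) such that for each edge (i,j) of H, the pair (V_i,V_j) is lower-(p_{ij},ε)-regular, meaning e(A',B') ≥ p_{ij}|A'||B'| − ε|V_i||V_j| for all A' ⊆ V_i, B' ⊆ V_j. Then the number of homomorphisms from H to G mapping vertex i into V_i is at least (Π_{(i,j)∈E(H)} p_{ij} − e(H)·ε)·Π_{i=1}^r |V_i|. -/

import Mathlib

open Finset

def fillFn {V ι : Type*} [DecidableEq ι] (i j : ι) (x y : V)
    (g : {k : ι // k ≠ i ∧ k ≠ j} → V) : ι → V :=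
  fun k => if h : k = i then x else if h' : k = j then y else g ⟨k, h, h'⟩

def HomOn {V ι : Type*} (G : SimpleGraph V) (S : Finset (Sym2 ι)) (f : ι → V) : Prop :=
  ∀ a b, s(a, b) ∈ S → G.Adj (f a) (f b)

open Classical in
lemma card_fibre {V ι : Type*} [Fintype ι] [DecidableEq ι] (Vs : ι → Finset V)
    (i j : ι) (hij : i ≠ j) (P : (ι → V) → Prop) :
    ((Fintype.piFinset Vs).filter P).card =
      ∑ g ∈ Fintype.piFinset (fun k : {k : ι // k ≠ i ∧ k ≠ j} => Vs k),
        ((Vs i ×ˢ Vs j).filter fun e => P (fillFn i j e.1 e.2 g)).card := by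
  have h1 : ∀ f : ι → V, fillFn i j (f i) (f j) (fun k => f k) = f := by
    intro f
    funext k
    unfold fillFn
    split_ifs with h h'
    · rw [h]
    · rw [h']
    · rfl
  have h2 : ∀ x y g, fillFn (V := V) i j x y g i = x := by
    intro x y g; simp [fillFn]
  have h3 : ∀ x y g, fillFn (V := V) i j x y g j = y := by
    intro x y g; simp [fillFn, hij.symm]
  have h4 : ∀ x y g (k : {k : ι // k ≠ i ∧ k ≠ j}), fillFn (V := V) i j x y g k = g k := by
    intro x y g k; simp [fillFn, k.2.1, k.2.2]
  rw [← Finset.card_sigma]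
  refine Finset.card_bij' (fun f _ => ⟨fun k => f k, (f i, f j)⟩)
    (fun s _ => fillFn i j s.2.1 s.2.2 s.1) ?_ ?_ ?_ ?_
  · intro f hf
    simp only [mem_filter, Fintype.mem_piFinset, mem_sigma, mem_product] at hf ⊢
    refine ⟨fun k => hf.1 k, ⟨hf.1 i, hf.1 j⟩, ?_⟩
    rw [h1]; exact hf.2
  · rintro ⟨g, x, y⟩ hs
    simp only [mem_filter, Fintype.mem_piFinset, mem_sigma, mem_product] at hs ⊢
    refine ⟨fun k => ?_, hs.2.2⟩
    by_cases hi : k = i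
    · subst hi; rw [h2]; exact hs.2.1.1
    by_cases hj : k = j
    · subst hj; rw [h3]; exact hs.2.1.2
    have := h4 x y g ⟨k, hi, hj⟩
    simp only at this
    rw [this]; exact hs.1 ⟨k, hi, hj⟩
  · intro f _
    exact h1 f
  · rintro ⟨g, x, y⟩ _
    simp only [h2, h3, h4]

lemma edge_arith (p q n ε P N : ℝ) (hp : 0 ≤ p) (hp1 : p ≤ 1) (hn : 0 ≤ n) (hε : 0 < ε)
    (hP : 0 ≤ P) (h : N ≥ (q - n * ε) * P) :
    (p * q - (n + 1) * ε) * P ≤ p * N - ε * P := by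
  have h1 := mul_le_mul_of_nonneg_left h hp
  have h2 : 0 ≤ (1 - p) * (n * ε * P) := mul_nonneg (by linarith) (by positivity)
  linarith

open Classical in
lemma edge_step {V ι : Type*} [Fintype ι] [DecidableEq ι] (G : SimpleGraph V)
    (Vs : ι → Finset V) (i j : ι) (hij : i ≠ j) (p ε : ℝ)
    (hreg : ∀ A' ⊆ Vs i, ∀ B' ⊆ Vs j,
      (((A' ×ˢ B').filter fun e => G.Adj e.1 e.2).card : ℝ)
        ≥ p * A'.card * B'.card - ε * (Vs i).card * (Vs j).card)
    (S : Finset (Sym2 ι)) (hS : s(i, j) ∉ S) :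
    (((Fintype.piFinset Vs).filter fun f =>
        HomOn G (insert s(i, j) S) f).card : ℝ) ≥
      p * ((Fintype.piFinset Vs).filter fun f =>
        HomOn G S f).card - ε * ∏ k, ((Vs k).card : ℝ) := by
  have hT : (∏ k, ((Vs k).card : ℝ)) =
      ∑ g ∈ Fintype.piFinset (fun k : {k : ι // k ≠ i ∧ k ≠ j} => Vs k),
        ((Vs i).card * (Vs j).card : ℝ) := by
    have := card_fibre Vs i j hij (fun _ => True)
    simp only [Finset.filter_true, Fintype.card_piFinset, card_product] at this
    exact_mod_cast this
  rw [card_fibre Vs i j hij, card_fibre Vs i j hij, hT]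
  push_cast
  rw [mul_sum, mul_sum, ← sum_sub_distrib]
  apply sum_le_sum
  intro g _
  have h2 : ∀ x y, fillFn (V := V) i j x y g i = x := by
    intro x y; simp [fillFn]
  have h3 : ∀ x y, fillFn (V := V) i j x y g j = y := by
    intro x y; simp [fillFn, hij.symm]
  set Q : V → V → Prop := fun x y =>
    HomOn G S (fillFn i j x y g) with hQ
  have hxi : ∀ x y y' k, k ≠ j → fillFn (V := V) i j x y g k = fillFn i j x y' g k := by
    intro x y y' k hk; simp [fillFn, hk]
  have hyj : ∀ x x' y k, k ≠ i → fillFn (V := V) i j x y g k = fillFn i j x' y g k := by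
    intro x x' y k hk; simp [fillFn, hk]
  have rect : ∀ x y x' y', Q x y' → Q x' y → Q x y := by
    intro x y x' y' h h' a b hab
    by_cases hj : a ≠ j ∧ b ≠ j
    · rw [hxi x y y' a hj.1, hxi x y y' b hj.2]; exact h a b hab
    · have hi : a ≠ i ∧ b ≠ i := by
        have hG := (h a b hab).ne
        constructor
        · rintro rfl
          have : b = j := by
            by_contra hb; exact hj ⟨hij, hb⟩
          subst this; exact hS hab
        · rintro rfl
          have : a = j := by
            by_contra hb; exact hj ⟨hb, hij⟩
          subst this; exact hS (Sym2.eq_swap ▸ hab)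
      rw [hyj x x' y a hi.1, hyj x x' y b hi.2]; exact h' a b hab
  set A := (Vs i).filter fun x => ∃ y ∈ Vs j, Q x y with hA
  set B := (Vs j).filter fun y => ∃ x ∈ Vs i, Q x y with hB
  have e1 : ((Vs i ×ˢ Vs j).filter fun e => Q e.1 e.2) = A ×ˢ B := by
    ext ⟨x, y⟩
    simp only [mem_filter, mem_product, hA, hB]
    constructor
    · rintro ⟨⟨hx, hy⟩, h⟩
      exact ⟨⟨hx, y, hy, h⟩, hy, x, hx, h⟩
    · rintro ⟨⟨hx, y', hy', h⟩, hy, x', hx', h'⟩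
      exact ⟨⟨hx, hy⟩, rect x y x' y' h h'⟩
  have e2 : ((Vs i ×ˢ Vs j).filter fun e =>
      HomOn G (insert s(i, j) S) (fillFn i j e.1 e.2 g)) =
      (A ×ˢ B).filter fun e => G.Adj e.1 e.2 := by
    rw [← e1, filter_filter]
    apply filter_congr
    rintro ⟨x, y⟩ _
    constructor
    · intro h
      refine ⟨fun a b hab => h a b (mem_insert_of_mem hab), ?_⟩
      have := h i j (mem_insert_self _ _)
      rwa [h2, h3] at this
    · rintro ⟨h, hadj⟩ a b hab
      rcases mem_insert.1 hab with hab | hab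
      · rcases Sym2.eq_iff.1 hab with ⟨rfl, rfl⟩ | ⟨rfl, rfl⟩
        · rw [h2, h3]; exact hadj
        · rw [h2, h3]; exact hadj.symm
      · exact h a b hab
  have := hreg A (filter_subset _ _) B (filter_subset _ _)
  have e1' := congrArg (fun s => (s.card : ℝ)) e1
  simp only [card_product, Nat.cast_mul] at e1'
  rw [e2]
  change p * (((Vs i ×ˢ Vs j).filter fun e => Q e.1 e.2).card : ℝ) - _ ≤ _
  rw [e1']
  linarith

theorem stmt_8 {V : Type*} [Fintype V] [DecidableEq V] (G : SimpleGraph V)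
    [DecidableRel G.Adj]
    (r : ℕ) (H : SimpleGraph (Fin r)) [DecidableRel H.Adj]
    (Vs : Fin r → Finset V) (pm : Fin r → Fin r → ℝ) (ε : ℝ) (hε : 0 < ε)
    (hsym : ∀ i j, pm i j = pm j i)
    (hpm : ∀ i j, 0 ≤ pm i j ∧ pm i j ≤ 1)
    (hreg : ∀ i j, H.Adj i j → ∀ A' ⊆ Vs i, ∀ B' ⊆ Vs j,
      (((A' ×ˢ B').filter fun e => G.Adj e.1 e.2).card : ℝ)
        ≥ pm i j * A'.card * B'.card - ε * (Vs i).card * (Vs j).card) :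
    (Nat.card {f : Fin r → V // (∀ i, f i ∈ Vs i) ∧
        ∀ i j, H.Adj i j → G.Adj (f i) (f j)} : ℝ)
      ≥ ((∏ e ∈ H.edgeFinset, Sym2.lift ⟨fun i j => pm i j, hsym⟩ e)
          - H.edgeFinset.card * ε) * ∏ i, ((Vs i).card : ℝ) := by
  classical
  have key : ∀ S : Finset (Sym2 (Fin r)), S ⊆ H.edgeFinset →
      (((Fintype.piFinset Vs).filter fun f =>
        HomOn G S f).card : ℝ) ≥
      ((∏ e ∈ S, Sym2.lift ⟨fun i j => pm i j, hsym⟩ e)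
          - S.card * ε) * ∏ i, ((Vs i).card : ℝ) := by
    intro S
    induction S using Finset.induction_on with
    | empty => intro _; simp [HomOn, Fintype.card_piFinset]
    | insert e S he ih =>
      intro hsub
      have ih := ih (fun x hx => hsub (mem_insert_of_mem hx))
      have heH := hsub (mem_insert_self e S)
      induction e using Sym2.ind with
      | _ i j =>
        have hadj : H.Adj i j := by simpa using heH
        have step := edge_step G Vs i j hadj.ne (pm i j) ε
          (by intro A hA B hB; convert hreg i j hadj A hA B hB) S he
        rw [prod_insert he, card_insert_of_notMem he]
        simp only [Sym2.lift_mk]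
        refine le_trans ?_ step
        have hP : 0 ≤ ∏ k, ((Vs k).card : ℝ) := prod_nonneg fun _ _ => Nat.cast_nonneg _
        rw [Nat.cast_add, Nat.cast_one]
        exact edge_arith _ _ _ _ _ _ (hpm i j).1 (hpm i j).2 (Nat.cast_nonneg _) hε hP ih
  have := key H.edgeFinset (Finset.Subset.refl _)
  refine le_trans this (le_of_eq ?_)
  rw [Nat.card_eq_fintype_card, Fintype.card_subtype]
  congr 2
  ext f
  simp [HomOn, Fintype.mem_piFinset]
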